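/- Let E be a real Banach space, N ≥ 0, K > 0. Let Z : [0,1] × [0,1] × E → E be a continuous map such that for all (s,t,x): the partial derivative ∂Z/∂t exists with ‖∂Z/∂t(s,t,x)‖ ≤ N, and Z(s,t,·) is differentiable in x with operator norm ‖D_x Z(s,t,x)‖ ≤ K. Suppose G : [0,1] × [0,1] × E → E is twice continuously differentiable and satisfies ∂G/∂s(s,t,x) = Z(s,t,G(s,t,x)) and G(0,t,x) = x for all t ∈ [0,1], x ∈ E. Then for all (s,t,x) ∈ [0,1] × [0,1] × E, ‖∂G/∂t(s,t,x)‖ ≤ (N/K)(exp(K s) − 1); in particular the family of vector fields V_{s,t} defined by V_{s,t}(G(s,t,x)) = ∂G/∂t(s,t,x) is uniformly bounded by (N/K)(exp(K) − 1). -/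

import Mathlib

open Set Real

/-- Boundedness of the two-parameter family `V_{s,t}`: if
`G(s,t,x)` is the `s`-flow of `Z(s,t,·)` (i.e. `∂G/∂s = Z(s,t,G)`, `G(0,t,x) = x`),
where `‖∂Z/∂t‖ ≤ N` and `‖D_x Z‖ ≤ K`, and `G` is `C²`, then
`‖∂G/∂t(s,t,x)‖ ≤ (N/K)(exp(K s) − 1)`, and in particular this `t`-derivative
family is uniformly bounded by `(N/K)(exp K − 1)`. -/
theorem bounded_two_parameter_family
    {E : Type*} [NormedAddCommGroup E] [NormedSpace ℝ E] [CompleteSpace E]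
    (N K : ℝ) (hN : 0 ≤ N) (hK : 0 < K)
    (Z Zt : ℝ → ℝ → E → E) (DZ : ℝ → ℝ → E → (E →L[ℝ] E))
    (hZcont : ContinuousOn (fun p : ℝ × ℝ × E => Z p.1 p.2.1 p.2.2)
      (Icc 0 1 ×ˢ Icc 0 1 ×ˢ univ))
    (hZt : ∀ s ∈ Icc (0:ℝ) 1, ∀ t ∈ Icc (0:ℝ) 1, ∀ x : E,
      HasDerivWithinAt (fun t' => Z s t' x) (Zt s t x) (Icc 0 1) t)
    (hZtbound : ∀ s ∈ Icc (0:ℝ) 1, ∀ t ∈ Icc (0:ℝ) 1, ∀ x : E, ‖Zt s t x‖ ≤ N)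
    (hDZ : ∀ s ∈ Icc (0:ℝ) 1, ∀ t ∈ Icc (0:ℝ) 1, ∀ x : E,
      HasFDerivAt (fun y => Z s t y) (DZ s t x) x)
    (hDZbound : ∀ s ∈ Icc (0:ℝ) 1, ∀ t ∈ Icc (0:ℝ) 1, ∀ x : E, ‖DZ s t x‖ ≤ K)
    (G Gt : ℝ → ℝ → E → E)
    (hG2 : ContDiffOn ℝ 2 (fun p : ℝ × ℝ × E => G p.1 p.2.1 p.2.2)
      (Icc 0 1 ×ˢ Icc 0 1 ×ˢ univ))
    (hGs : ∀ s ∈ Icc (0:ℝ) 1, ∀ t ∈ Icc (0:ℝ) 1, ∀ x : E,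
      HasDerivWithinAt (fun s' => G s' t x) (Z s t (G s t x)) (Icc 0 1) s)
    (hG0 : ∀ t ∈ Icc (0:ℝ) 1, ∀ x : E, G 0 t x = x)
    (hGt : ∀ s ∈ Icc (0:ℝ) 1, ∀ t ∈ Icc (0:ℝ) 1, ∀ x : E,
      HasDerivWithinAt (fun t' => G s t' x) (Gt s t x) (Icc 0 1) t) :
    ∀ s ∈ Icc (0:ℝ) 1, ∀ t ∈ Icc (0:ℝ) 1, ∀ x : E,
      ‖Gt s t x‖ ≤ (N / K) * (Real.exp (K * s) - 1) ∧
      ‖Gt s t x‖ ≤ (N / K) * (Real.exp K - 1) := by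
  have key : ∀ s ∈ Icc (0:ℝ) 1, ∀ t ∈ Icc (0:ℝ) 1, ∀ t' ∈ Icc (0:ℝ) 1, ∀ x : E,
      ‖G s t' x - G s t x‖ ≤ (N / K) * (Real.exp (K * s) - 1) * |t' - t| := by
    intro s hs t ht t' ht' x
    have hder : ∀ r ∈ Icc (0:ℝ) 1, ∀ s ∈ Ico (0:ℝ) 1,
        HasDerivWithinAt (fun s' => G s' r x) (Z s r (G s r x)) (Ici s) s := by
      intro r hr s hs
      exact (hGs s ⟨hs.1, hs.2.le⟩ r hr x).mono_of_mem_nhdsWithin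
        (Filter.mem_of_superset (Icc_mem_nhdsGE hs.2) (Icc_subset_Icc_left hs.1))
    have hcont : ∀ r ∈ Icc (0:ℝ) 1, ContinuousOn (fun s' => G s' r x) (Icc 0 1) :=
      fun r hr s hs => (hGs s hs r hr x).continuousWithinAt
    have h := dist_le_of_approx_trajectories_ODE_of_mem (v := fun s y => Z s t y)
      (s := fun _ => univ) (K := ⟨K, hK.le⟩) (a := 0) (b := 1)
      (f := fun s => G s t' x) (g := fun s => G s t x)
      (f' := fun s => Z s t' (G s t' x)) (g' := fun s => Z s t (G s t x))
      (εf := N * |t' - t|) (εg := 0) (δ := 0)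
      (fun s hs => convex_univ.lipschitzOnWith_of_nnnorm_hasFDerivWithin_le
        (fun y _ => (hDZ s ⟨hs.1, hs.2.le⟩ t ht y).hasFDerivWithinAt)
        (fun y _ => hDZbound s ⟨hs.1, hs.2.le⟩ t ht y))
      (hcont t' ht') (hder t' ht')
      (fun s hs => by
        rw [dist_eq_norm]
        exact (convex_Icc (0:ℝ) 1).norm_image_sub_le_of_norm_hasDerivWithin_le
          (fun r hr => hZt s ⟨hs.1, hs.2.le⟩ r hr (G s t' x))
          (fun r hr => hZtbound s ⟨hs.1, hs.2.le⟩ r hr (G s t' x)) ht ht')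
      (fun _ _ => mem_univ _)
      (hcont t ht) (hder t ht) (fun s hs => by simp) (fun _ _ => mem_univ _)
      (by simp [hG0 t ht, hG0 t' ht']) s hs
    change dist (G s t' x) (G s t x) ≤ gronwallBound 0 K (N * |t' - t| + 0) (s - 0) at h
    rw [gronwallBound_of_K_ne_0 hK.ne', dist_eq_norm] at h
    refine h.trans (le_of_eq ?_)
    simp only [sub_zero, add_zero]
    ring
  intro s hs t ht x
  have main : ‖Gt s t x‖ ≤ (N / K) * (Real.exp (K * s) - 1) := by
    have hacc := uniqueDiffWithinAt_iff_accPt.1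
      ((uniqueDiffOn_Icc (zero_lt_one : (0:ℝ) < 1)) t ht)
    rw [accPt_principal_iff_nhdsWithin] at hacc
    have hlim := (hasDerivWithinAt_iff_tendsto_slope.1 (hGt s hs t ht x)).norm
    refine le_of_tendsto hlim ?_
    filter_upwards [self_mem_nhdsWithin] with t' ht'
    have hne : 0 < |t' - t| := abs_pos.2 (sub_ne_zero.2 ht'.2)
    rw [slope_def_module, norm_smul, norm_inv, Real.norm_eq_abs, inv_mul_le_iff₀ hne, mul_comm]
    exact key s hs t ht t' ht'.1 x
  refine ⟨main, main.trans ?_⟩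
  have : K * s ≤ K := by nlinarith [hs.2]
  have h1 := Real.exp_le_exp.2 this
  have h2 : 0 ≤ N / K := by positivity
  exact mul_le_mul_of_nonneg_left (by linarith) h2
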